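/- arXiv:2009.12020 — 4 statements merged into one kernel-verified Lean document; each statement's English description precedes it below -/
import Mathlib

section
/- For every fixed integer ℓ ≥ 2 and every real ε > 0, there exists t₀ such that for all integers t ≥ t₀ the ℓ-color Ramsey number of K_t satisfies r(t;ℓ) > 2^{((3ℓ/8) − 1/4 − ε)·t}; that is, there exists a coloring of the edges of the complete graph on N = ⌈2^{((3ℓ/8) − 1/4 − ε)·t}⌉ vertices with ℓ colors containing no monochromatic clique of size t. -/
open Finset

/-- The proportion of functions `α → β` whose restriction to `T` satisfies `Q` is the proportion
of functions `T → β` satisfying `Q`. -/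
theorem card_filter_restrict_mul {α β : Type*} [Fintype α] [DecidableEq α] [Fintype β]
    (T : Finset α) (Q : (T → β) → Prop) [DecidablePred Q] :
    #{f : α → β | Q fun x => f x} * Fintype.card β ^ #T =
      #{g : T → β | Q g} * Fintype.card β ^ Fintype.card α := by
  let e := Equiv.piEquivPiSubtypeProd (fun x => x ∈ T) (fun _ : α => β)
  have h : #{f : α → β | Q fun x => f x} =
      #(({g : T → β | Q g} : Finset _) ×ˢ (univ : Finset ({x // x ∉ T} → β))) := by
    refine Finset.card_equiv e fun f => ?_
    simp [e, Equiv.piEquivPiSubtypeProd]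
  rw [h, card_product, card_univ, Fintype.card_fun, mul_assoc, ← pow_add]
  congr 2
  have h1 : Fintype.card {x // x ∉ T} = Fintype.card α - #T := by simp
  have := card_le_univ T
  omega

/-- First-moment method: some function satisfies at most the expected number of local events. -/
theorem exists_fun_card_filter_restrict_mul_le {ι α β : Type*} [Fintype α] [DecidableEq α]
    [Fintype β] [Nonempty β] (F : Finset ι) (T : ι → Finset α) (Q : ∀ i, (T i → β) → Prop)
    [∀ i, DecidablePred (Q i)] (m a : ℕ)
    (hT : ∀ i ∈ F, #(T i) = m) (hQ : ∀ i ∈ F, #{g : T i → β | Q i g} ≤ a) :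
    ∃ f : α → β, #{i ∈ F | Q i fun x => f x} * Fintype.card β ^ m ≤ a * #F := by
  by_contra! h
  have h1 : ∑ _f : α → β, a * #F <
      ∑ f : α → β, #{i ∈ F | Q i fun x => f x} * Fintype.card β ^ m :=
    sum_lt_sum_of_nonempty univ_nonempty fun f _ => h f
  have h2 : ∑ f : α → β, #{i ∈ F | Q i fun x => f x} * Fintype.card β ^ m =
      ∑ i ∈ F, #{f : α → β | Q i fun x => f x} * Fintype.card β ^ m := by
    simp_rw [← sum_mul, card_filter]
    rw [sum_comm]
  have h3 : ∑ i ∈ F, #{f : α → β | Q i fun x => f x} * Fintype.card β ^ m ≤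
      ∑ i ∈ F, a * Fintype.card β ^ Fintype.card α := by
    refine sum_le_sum fun i hi => ?_
    rw [← hT i hi, card_filter_restrict_mul (T i) (Q i)]
    exact Nat.mul_le_mul_right _ (hQ i hi)
  rw [h2] at h1
  have h4 := h1.trans_le h3
  simp only [sum_const, card_univ, Fintype.card_fun, smul_eq_mul] at h4
  exact h4.ne (by ring)

section Form

variable {K V : Type*} [Field K] [AddCommGroup V] [Module K V]

/-- Vectors with pairwise products `1` under an alternating form number at most `dim V + 1`. -/
theorem card_le_finrank_add_one_of_pairwise_eq_one [FiniteDimensional K V] {ι : Type*}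
    (B : LinearMap.BilinForm K V) (hB : B.IsAlt) (S : Finset ι) (x : ι → V)
    (h : (S : Set ι).Pairwise fun i j => B (x i) (x j) = 1) :
    #S ≤ Module.finrank K V + 1 := by
  classical
  rcases S.eq_empty_or_nonempty with rfl | ⟨a, ha⟩
  · simp
  have hlin : LinearIndepOn K x (S.erase a : Set ι) := by
    rw [linearIndepOn_finset_iff]
    intro c hc
    have key (j : ι) : ∑ i ∈ S.erase a, c i * B (x i) (x j) = 0 := by
      have := congrArg (fun v => B v (x j)) hc
      simpa using this
    have hsum : ∑ i ∈ S.erase a, c i = 0 := by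
      rw [← key a]
      refine sum_congr rfl fun i hi => ?_
      rw [h (mem_of_mem_erase hi) ha (ne_of_mem_erase hi), mul_one]
    intro j hj
    have h1 := key j
    rw [← add_sum_erase _ _ hj] at h1 hsum
    rw [hB (x j), mul_zero, zero_add] at h1
    have h2 : ∑ i ∈ (S.erase a).erase j, c i * B (x i) (x j) = ∑ i ∈ (S.erase a).erase j, c i := by
      refine sum_congr rfl fun i hi => ?_
      rw [h (mem_of_mem_erase (mem_of_mem_erase hi)) (mem_of_mem_erase hj) (ne_of_mem_erase hi),
        mul_one]
    rw [← h2, h1, add_zero] at hsum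
    exact hsum
  have h1 : #(S.erase a) ≤ Module.finrank K V := by
    rw [← Fintype.card_coe]
    exact LinearIndependent.fintype_card_le_finrank hlin
  have h2 : #(S.erase a) = #S - 1 := card_erase_of_mem ha
  omega

/-- Adjoining an orthogonal vector to an isotropic subspace keeps it isotropic. -/
theorem isotropic_sup_span_singleton (B : LinearMap.BilinForm K V) (hB : B.IsAlt)
    (U : Submodule K V) (hU : ∀ u ∈ U, ∀ w ∈ U, B u w = 0) (v : V) (hv : ∀ u ∈ U, B u v = 0) :
    ∀ u ∈ U ⊔ K ∙ v, ∀ w ∈ U ⊔ K ∙ v, B u w = 0 := by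
  have hv' : ∀ u ∈ U, B v u = 0 := fun u hu => hB.isRefl _ _ (hv u hu)
  intro u hu w hw
  obtain ⟨u₁, hu₁, u₂, hu₂, rfl⟩ := Submodule.mem_sup.1 hu
  obtain ⟨w₁, hw₁, w₂, hw₂, rfl⟩ := Submodule.mem_sup.1 hw
  obtain ⟨a, rfl⟩ := Submodule.mem_span_singleton.1 hu₂
  obtain ⟨b, rfl⟩ := Submodule.mem_span_singleton.1 hw₂
  simp [hU u₁ hu₁ w₁ hw₁, hv u₁ hu₁, hv' w₁ hw₁, hB v]

/-- An isotropic subspace of a nondegenerate bilinear form on a `2k`-dimensional space has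
dimension at most `k`. -/
theorem finrank_le_of_isotropic [FiniteDimensional K V] (B : LinearMap.BilinForm K V)
    (hnd : B.Nondegenerate) {k : ℕ} (hk : Module.finrank K V = 2 * k)
    (U : Submodule K V) (hU : ∀ u ∈ U, ∀ w ∈ U, B u w = 0) : Module.finrank K U ≤ k := by
  have h1 := LinearMap.BilinForm.finrank_orthogonal hnd U
  have h2 : U ≤ B.orthogonal U := fun w hw =>
    LinearMap.BilinForm.mem_orthogonal_iff.2 fun u hu => hU u hu w hw
  have h3 := Submodule.finrank_mono h2
  omega

open scoped Classical in
/-- Count of the pairwise orthogonal `n`-tuples that are orthogonal to an isotropic subspace `U`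
of codimension `m` in a Lagrangian subspace. -/
theorem card_isotropic_tuples_orthogonal_le {V : Type*} [AddCommGroup V] [Module (ZMod 2) V]
    [Fintype V] (B : LinearMap.BilinForm (ZMod 2) V) (hB : B.IsAlt) (hnd : B.Nondegenerate) {k : ℕ}
    (hk : Module.finrank (ZMod 2) V = 2 * k) (n : ℕ) :
    ∀ (m : ℕ) (U : Submodule (ZMod 2) V), (∀ u ∈ U, ∀ w ∈ U, B u w = 0) →
      Module.finrank (ZMod 2) U + m = k →
      #{g : Fin n → V | (∀ i, ∀ u ∈ U, B u (g i) = 0) ∧ ∀ i j, B (g i) (g j) = 0} ≤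
        2 ^ (n + k * n + ∑ i ∈ range (m + 1), i) := by
  induction n with
  | zero =>
    intro m U _ _
    exact (card_le_univ _).trans (by simpa using Nat.one_le_two_pow)
  | succ n ih =>
    intro m U hU hm
    have hsplit : #{g : Fin (n + 1) → V |
        (∀ i, ∀ u ∈ U, B u (g i) = 0) ∧ ∀ i j, B (g i) (g j) = 0} =
        ∑ v : V, #{g : Fin n → V | (∀ i, ∀ u ∈ U, B u (Fin.cons (α := fun _ => V) v g i) = 0) ∧
          ∀ i j, B (Fin.cons (α := fun _ => V) v g i) (Fin.cons (α := fun _ => V) v g j) = 0} := by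
      simp_rw [card_filter]
      rw [← (Fin.consEquiv fun _ : Fin (n + 1) => V).sum_comp, Fintype.sum_prod_type]
      rfl
    have hcardU : #{v : V | v ∈ U} = 2 ^ Module.finrank (ZMod 2) U := by
      have := Module.card_eq_pow_finrank (K := ZMod 2) (V := U)
      rw [ZMod.card] at this
      rw [← this, Fintype.card_subtype]
    have hcardO : #{v : V | v ∈ B.orthogonal U} = 2 ^ (2 * k - Module.finrank (ZMod 2) U) := by
      have := Module.card_eq_pow_finrank (K := ZMod 2) (V := B.orthogonal U)
      rw [ZMod.card, LinearMap.BilinForm.finrank_orthogonal hnd, hk] at this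
      rw [← this, Fintype.card_subtype]
    set E := n + k * n + ∑ i ∈ range (m + 1), i with hE
    have hterm (v : V) : #{g : Fin n → V |
          (∀ i, ∀ u ∈ U, B u (Fin.cons (α := fun _ => V) v g i) = 0) ∧
          ∀ i j, B (Fin.cons (α := fun _ => V) v g i) (Fin.cons (α := fun _ => V) v g j) = 0} ≤
        (if v ∈ U then 2 ^ E else 0) +
          (if v ∈ B.orthogonal U then 2 ^ (n + k * n + ∑ i ∈ range m, i) else 0) := by
      by_cases hvU : v ∈ U
      · rw [if_pos hvU]
        refine le_add_right ((card_le_card fun g hg => ?_).trans (ih m U hU hm))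
        simp only [mem_filter, mem_univ, true_and] at hg ⊢
        exact ⟨fun i u hu => by simpa using hg.1 i.succ u hu,
          fun i j => by simpa using hg.2 i.succ j.succ⟩
      rw [if_neg hvU, zero_add]
      by_cases hvO : v ∈ B.orthogonal U
      · rw [if_pos hvO]
        have hvO' : ∀ u ∈ U, B u v = 0 := LinearMap.BilinForm.mem_orthogonal_iff.1 hvO
        have hiso := isotropic_sup_span_singleton B hB U hU v hvO'
        have hrank : Module.finrank (ZMod 2) ↥(U ⊔ (ZMod 2) ∙ v) =
            Module.finrank (ZMod 2) U + 1 :=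
          Submodule.finrank_sup_span_singleton hvU
        have hle := finrank_le_of_isotropic B hnd hk _ hiso
        obtain ⟨m', rfl⟩ : ∃ m', m = m' + 1 := ⟨m - 1, by omega⟩
        refine (card_le_card fun g hg => ?_).trans (ih m' _ hiso (by omega))
        simp only [mem_filter, mem_univ, true_and] at hg ⊢
        refine ⟨fun i u hu => ?_, fun i j => by simpa using hg.2 i.succ j.succ⟩
        obtain ⟨u₁, hu₁, u₂, hu₂, rfl⟩ := Submodule.mem_sup.1 hu
        obtain ⟨a, rfl⟩ := Submodule.mem_span_singleton.1 hu₂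
        have h1 : B u₁ (g i) = 0 := by simpa using hg.1 i.succ u₁ hu₁
        have h2 : B v (g i) = 0 := by simpa using hg.2 0 i.succ
        simp [h1, h2]
      · rw [if_neg hvO, Nat.le_zero, card_eq_zero, filter_eq_empty_iff]
        intro g _ hg
        exact hvO (LinearMap.BilinForm.mem_orthogonal_iff.2 fun u hu => by simpa using hg.1 0 u hu)
    rw [hsplit]
    refine (sum_le_sum fun v _ => hterm v).trans ?_
    rw [sum_add_distrib, ← sum_filter, ← sum_filter, sum_const, sum_const, hcardU, hcardO,
      smul_eq_mul, smul_eq_mul, ← pow_add, ← pow_add]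
    have e1 : 2 * k - Module.finrank (ZMod 2) U + (n + k * n + ∑ i ∈ range m, i) = k + E := by
      rw [hE, sum_range_succ]
      omega
    have e2 : n + 1 + k * (n + 1) + ∑ i ∈ range (m + 1), i = k + E + 1 := by
      rw [hE]
      ring
    rw [e1, e2, pow_succ, mul_two]
    gcongr
    · norm_num
    · omega

open scoped Classical in
/-- Count of the pairwise orthogonal tuples for a nondegenerate alternating form over `𝔽₂`. -/
theorem card_isotropic_tuples_le {V ι : Type*} [AddCommGroup V] [Module (ZMod 2) V]
    [Fintype V] [Fintype ι] (B : LinearMap.BilinForm (ZMod 2) V) (hB : B.IsAlt)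
    (hnd : B.Nondegenerate) {k : ℕ} (hk : Module.finrank (ZMod 2) V = 2 * k) :
    #{g : ι → V | ∀ i j, B (g i) (g j) = 0} ≤
      2 ^ (Fintype.card ι + k * Fintype.card ι + ∑ i ∈ range (k + 1), i) := by
  refine le_trans (le_of_eq ?_) (card_isotropic_tuples_orthogonal_le B hB hnd hk
    (Fintype.card ι) k ⊥ (by simp) (by simp))
  refine Finset.card_equiv ((Fintype.equivFin ι).arrowCongr (Equiv.refl V)) fun g => ?_
  simp [Equiv.forall_congr_left (Fintype.equivFin ι)]

end Form

/-- A nondegenerate alternating form over `𝔽₂` exists in every even dimension. -/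
theorem exists_nondegenerate_alternating_form (k : ℕ) :
    ∃ B : LinearMap.BilinForm (ZMod 2) ((Fin k → ZMod 2) × (Fin k → ZMod 2)),
      B.IsAlt ∧ B.Nondegenerate := by
  let D : LinearMap.BilinForm (ZMod 2) (Fin k → ZMod 2) := dotProductBilin (ZMod 2) (ZMod 2)
  let B : LinearMap.BilinForm (ZMod 2) ((Fin k → ZMod 2) × (Fin k → ZMod 2)) :=
    D.compl₁₂ (LinearMap.fst _ _ _) (LinearMap.snd _ _ _) +
      D.compl₁₂ (LinearMap.snd _ _ _) (LinearMap.fst _ _ _)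
  have hB (x y) : B x y = x.1 ⬝ᵥ y.2 + x.2 ⬝ᵥ y.1 := rfl
  have halt : B.IsAlt := fun x => by
    rw [hB, dotProduct_comm x.2, CharTwo.add_self_eq_zero]
  refine ⟨B, halt, ?_⟩
  refine (LinearMap.IsRefl.nondegenerate_iff_separatingLeft halt.isRefl).2 ?_
  intro x hx
  ext i
  · simpa [hB] using hx (0, Pi.single i 1)
  · simpa [hB] using hx (Pi.single i 1, 0)

open scoped Classical in
/-- Iterating the random pullback of the orthogonality graph: `L` colors without monochromatic
`t`-cliques, leaving few `t`-sets entirely in the leftover color `L`. -/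
theorem exists_coloring_card_leftover_le (α : Type*) [Fintype α] {t k : ℕ} (hkt : 2 * k + 1 < t)
    (L : ℕ) :
    ∃ χ : α → α → ℕ, (∀ x y, χ x y = χ y x) ∧ (∀ x y, χ x y ≤ L) ∧
      (∀ c < L, ∀ S : Finset α, #S = t → ¬ (S : Set α).Pairwise fun x y => χ x y = c) ∧
      #{S ∈ powersetCard t univ | ((S : Finset α) : Set α).Pairwise fun x y => χ x y = L} *
          (2 ^ (2 * k * t)) ^ L ≤
        (2 ^ (t + k * t + ∑ i ∈ range (k + 1), i)) ^ L * (Fintype.card α).choose t := by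
  induction L with
  | zero =>
    refine ⟨fun _ _ => 0, fun _ _ => rfl, fun _ _ => le_rfl, by simp, ?_⟩
    simpa using (card_filter_le _ _).trans (card_powersetCard t (univ : Finset α)).le
  | succ L ih =>
    obtain ⟨χ, hsymm, hle, hfree, hcount⟩ := ih
    obtain ⟨B, halt, hnd⟩ := exists_nondegenerate_alternating_form k
    have hrank : Module.finrank (ZMod 2) ((Fin k → ZMod 2) × (Fin k → ZMod 2)) = 2 * k := by
      simp [two_mul]
    have hcardV : Fintype.card ((Fin k → ZMod 2) × (Fin k → ZMod 2)) = 2 ^ (2 * k) := by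
      simp [two_mul, pow_add]
    have hBsymm (v w) : B v w = 0 ↔ B w v = 0 := halt.isRefl.eq_iff
    set F : Finset (Finset α) :=
      {S ∈ powersetCard t univ | ((S : Finset α) : Set α).Pairwise fun x y => χ x y = L}
    have hFcard : ∀ S ∈ F, #S = t := fun S hS =>
      (mem_powersetCard.1 (mem_filter.1 hS).1).2
    obtain ⟨f, hf⟩ := exists_fun_card_filter_restrict_mul_le
      (β := (Fin k → ZMod 2) × (Fin k → ZMod 2)) F (fun S => S)
      (fun _ g => ∀ i j, B (g i) (g j) = 0) t (2 ^ (t + k * t + ∑ i ∈ range (k + 1), i)) hFcard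
      (fun S hS => by
        have := card_isotropic_tuples_le (ι := S) B halt hnd hrank
        rw [Fintype.card_coe, hFcard S hS] at this
        convert this)
    refine ⟨fun x y => if χ x y = L ∧ B (f x) (f y) = 0 then L + 1 else χ x y,
      fun x y => by simp only [hsymm x y, hBsymm (f x) (f y)], fun x y => ?_, ?_, ?_⟩
    · dsimp only
      have := hle x y
      split_ifs <;> omega
    · intro c hc S hS hmono
      rcases Nat.lt_succ_iff_lt_or_eq.1 hc with hc | rfl
      · refine hfree c hc S hS fun x hx y hy hxy => ?_
        have := hmono hx hy hxy
        dsimp only at this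
        split_ifs at this <;> omega
      · have := card_le_finrank_add_one_of_pairwise_eq_one B halt S f fun x hx y hy hxy => by
          have := hmono hx hy hxy
          dsimp only at this
          split_ifs at this with h
          · omega
          · exact Fin.eq_one_of_ne_zero _ fun h0 => h ⟨this, h0⟩
        omega
    · have hsub : #{S ∈ powersetCard t univ | ((S : Finset α) : Set α).Pairwise fun x y =>
            (if χ x y = L ∧ B (f x) (f y) = 0 then L + 1 else χ x y) = L + 1} ≤
          #(F.filter fun S : Finset α => ∀ i j : S, B (f i) (f j) = 0) := by
        refine card_le_card fun S hS => ?_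
        obtain ⟨hS1, hS2⟩ := mem_filter.1 hS
        have key : ∀ x ∈ S, ∀ y ∈ S, x ≠ y → χ x y = L ∧ B (f x) (f y) = 0 := by
          intro x hx y hy hxy
          have h1 := hS2 hx hy hxy
          have h2 := hle x y
          dsimp only at h1
          split_ifs at h1 with h
          · exact h
          · omega
        refine mem_filter.2 ⟨mem_filter.2 ⟨hS1, fun x hx y hy hxy => (key x hx y hy hxy).1⟩, ?_⟩
        rintro ⟨x, hx⟩ ⟨y, hy⟩
        by_cases hxy : x = y
        · subst hxy
          exact halt _
        · exact (key x hx y hy hxy).2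
      rw [hcardV, ← pow_mul] at hf
      calc _ ≤ #(F.filter fun S : Finset α => ∀ i j : S, B (f i) (f j) = 0) * (2 ^ (2 * k * t)) ^ (L + 1) :=
            Nat.mul_le_mul_right _ hsub
        _ = (#(F.filter fun S : Finset α => ∀ i j : S, B (f i) (f j) = 0) * 2 ^ (2 * k * t)) *
            (2 ^ (2 * k * t)) ^ L := by ring
        _ ≤ 2 ^ (t + k * t + ∑ i ∈ range (k + 1), i) * #F * (2 ^ (2 * k * t)) ^ L :=
            Nat.mul_le_mul_right _ hf
        _ = 2 ^ (t + k * t + ∑ i ∈ range (k + 1), i) * (#F * (2 ^ (2 * k * t)) ^ L) := by ring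
        _ ≤ _ := Nat.mul_le_mul_left _ hcount
        _ = _ := by ring

open scoped Classical in
/-- A random two-coloring makes at most a `2 ^ (1 - t.choose 2)` proportion of a family of
`t`-sets monochromatic. -/
theorem exists_two_coloring_card_mono_le {α : Type*} [Fintype α] {t : ℕ} (F : Finset (Finset α))
    (hF : ∀ S ∈ F, #S = t) :
    ∃ g : Sym2 α → Bool,
      #{S ∈ F | ∃ b, ∀ x ∈ S, ∀ y ∈ S, x ≠ y → g s(x, y) = b} * 2 ^ t.choose 2 ≤ 2 * #F := by
  obtain ⟨g, hg⟩ := exists_fun_card_filter_restrict_mul_le (β := Bool) F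
    (fun S => S.offDiag.image Sym2.mk.uncurry) (fun _ h => ∃ b, ∀ e, h e = b) (t.choose 2) 2
    (fun S hS => by
      rw [← hF S hS, ← Sym2.card_image_offDiag])
    (fun S _ => by
      refine (card_le_card (t := univ.image fun b _ => b) fun h hh => ?_).trans
        (card_image_le.trans (by simp))
      obtain ⟨b, hb⟩ := (mem_filter.1 hh).2
      exact mem_image.2 ⟨b, mem_univ _, funext fun e => (hb e).symm⟩)
  refine ⟨g, ?_⟩
  rw [Fintype.card_bool] at hg
  refine le_trans (Nat.mul_le_mul_right _ (card_le_card fun S hS => ?_)) hg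
  obtain ⟨hS, b, hb⟩ := mem_filter.1 hS
  refine mem_filter.2 ⟨hS, b, ?_⟩
  rintro ⟨e, he⟩
  obtain ⟨⟨x, y⟩, hxy, rfl⟩ := mem_image.1 he
  obtain ⟨hx, hy, hne⟩ := mem_offDiag.1 hxy
  exact hb x hx y hy hne

/-- The finite form of the lower bound: a numerical condition on the number of vertices,
`t` and `k` that ensures a good coloring with `L + 2` colors. -/
theorem exists_coloring_of_lt {α : Type*} [Fintype α] {t k L : ℕ} (hkt : 2 * k + 1 < t)
    (hN : 2 * ((2 ^ (t + k * t + ∑ i ∈ range (k + 1), i)) ^ L * (Fintype.card α).choose t) <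
      2 ^ t.choose 2 * (2 ^ (2 * k * t)) ^ L) :
    ∃ χ : α → α → Fin (L + 2), (∀ x y, χ x y = χ y x) ∧
      ¬ ∃ (S : Finset α) (c : Fin (L + 2)), #S = t ∧
        ∀ x ∈ S, ∀ y ∈ S, x ≠ y → χ x y = c := by
  classical
  obtain ⟨χ, hsymm, hle, hfree, hcount⟩ := exists_coloring_card_leftover_le α hkt L
  set F : Finset (Finset α) :=
    {S ∈ powersetCard t univ | ((S : Finset α) : Set α).Pairwise fun x y => χ x y = L}
  obtain ⟨g, hg⟩ := exists_two_coloring_card_mono_le F fun S hS =>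
    (mem_powersetCard.1 (mem_filter.1 hS).1).2
  have hempty : ∀ S ∈ F, ¬ ∃ b, ∀ x ∈ S, ∀ y ∈ S, x ≠ y → g s(x, y) = b := by
    intro S hS hb
    have h1 : 2 ^ t.choose 2 ≤ 2 * #F := by
      refine le_trans (Nat.le_mul_of_pos_left _ (card_pos.2 ⟨S, ?_⟩)) hg
      rw [mem_filter]
      exact ⟨hS, hb⟩
    have h2 := Nat.mul_le_mul_right ((2 ^ (2 * k * t)) ^ L) h1
    rw [mul_assoc 2 #F] at h2
    exact absurd hN (not_lt.2 (h2.trans (Nat.mul_le_mul_left 2 hcount)))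
  refine ⟨fun x y => ⟨if χ x y = L ∧ g s(x, y) = true then L + 1 else χ x y, ?_⟩, ?_, ?_⟩
  · have := hle x y
    split_ifs <;> omega
  · intro x y
    simp only [hsymm x y, Sym2.eq_swap (a := x)]
  · rintro ⟨S, ⟨c, hc⟩, hS, hmono⟩
    simp only [Fin.mk.injEq] at hmono
    rcases lt_or_ge c L with hcL | hcL
    · refine hfree c hcL S hS fun x hx y hy hxy => ?_
      have := hmono x hx y hy hxy
      split_ifs at this <;> omega
    · have hχ : ∀ x ∈ S, ∀ y ∈ S, x ≠ y → χ x y = L := fun x hx y hy hxy => by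
        have h1 := hmono x hx y hy hxy
        have h2 := hle x y
        split_ifs at h1 with h
        · exact h.1
        · omega
      have hSF : S ∈ F := mem_filter.2
        ⟨mem_powersetCard.2 ⟨subset_univ _, hS⟩, fun x hx y hy hxy => hχ x hx y hy hxy⟩
      refine hempty S hSF ⟨decide (c = L + 1), fun x hx y hy hxy => ?_⟩
      have h1 := hmono x hx y hy hxy
      have h2 := hχ x hx y hy hxy
      by_cases hgt : g s(x, y) = true
      · rw [if_pos ⟨h2, hgt⟩] at h1
        rw [hgt]
        simp [h1]
      · rw [if_neg fun h => hgt h.2] at h1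
        rw [Bool.eq_false_iff.2 hgt]
        symm
        rw [decide_eq_false_iff_not]
        omega

/-- The asymptotic estimate behind the choice of the number of vertices. -/
theorem ramsey_exponent_lt {t k L ε : ℝ} (hL : 0 ≤ L) (hk0 : 0 ≤ k)
    (hk1 : 2 * k + 2 ≤ t) (hk2 : t ≤ 2 * k + 3) (ht : 10 + 10 * L ≤ ε * t) :
    1 + (t + k * t + k * (k + 1) / 2) * L + ((3 * (L + 2) / 8 - 1 / 4 - ε) * t + 1) * t <
      t * (t - 1) / 2 + 2 * k * t * L := by
  have h1 : t + k * t + k * (k + 1) / 2 - 2 * k * t + 3 * t ^ 2 / 8 ≤ 3 * t := by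
    nlinarith
  have h2 := mul_le_mul_of_nonneg_right h1 hL
  have h3 := mul_le_mul_of_nonneg_right ht (by linarith : 0 ≤ t)
  nlinarith [mul_nonneg hL (by linarith : 0 ≤ t)]

/-- For every fixed `ℓ ≥ 2` and every `ε > 0`, there is `t₀` such that for all `t ≥ t₀`,
the `ℓ`-color Ramsey number satisfies `r(t;ℓ) > 2^{((3ℓ/8) - 1/4 - ε) t}`: there is an
`ℓ`-coloring of the edges of the complete graph on `⌈2^{((3ℓ/8) - 1/4 - ε) t}⌉` vertices
with no monochromatic clique of size `t`. -/
theorem multicolor_ramsey_lower_bound (ℓ : ℕ) (hℓ : 2 ≤ ℓ) (ε : ℝ) (hε : 0 < ε) :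
    ∃ t₀ : ℕ, ∀ t : ℕ, t₀ ≤ t →
      ∃ χ : Fin (⌈(2 : ℝ) ^ (((3 * ℓ : ℝ) / 8 - 1 / 4 - ε) * t)⌉₊) →
            Fin (⌈(2 : ℝ) ^ (((3 * ℓ : ℝ) / 8 - 1 / 4 - ε) * t)⌉₊) → Fin ℓ,
        (∀ x y, χ x y = χ y x) ∧
        ¬ ∃ (S : Finset (Fin (⌈(2 : ℝ) ^ (((3 * ℓ : ℝ) / 8 - 1 / 4 - ε) * t)⌉₊)))
            (c : Fin ℓ), S.card = t ∧ ∀ x ∈ S, ∀ y ∈ S, x ≠ y → χ x y = c := by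
  obtain ⟨L, rfl⟩ : ∃ L, ℓ = L + 2 := ⟨ℓ - 2, by omega⟩
  refine ⟨max 2 ⌈(10 + 10 * L : ℝ) / ε⌉₊, fun t ht => ?_⟩
  have ht2 : 2 ≤ t := (le_max_left _ _).trans ht
  have htε : 10 + 10 * (L : ℝ) ≤ ε * t := by
    have := Nat.ceil_le.1 ((le_max_right _ _).trans ht)
    rwa [div_le_iff₀' hε] at this
  obtain ⟨k, hk1, hk2⟩ : ∃ k, 2 * k + 2 ≤ t ∧ t ≤ 2 * k + 3 := ⟨(t - 2) / 2, by omega, by omega⟩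
  refine exists_coloring_of_lt (k := k) (by omega) ?_
  rw [Fintype.card_fin]
  set α : ℝ := (3 * ((L + 2 : ℕ) : ℝ)) / 8 - 1 / 4 - ε with hα
  set N := ⌈(2 : ℝ) ^ (α * t)⌉₊ with hN
  rcases le_total α 0 with hα0 | hα0
  · have hN1 : N ≤ 1 := by
      refine Nat.ceil_le.2 ?_
      rw [Nat.cast_one]
      exact Real.rpow_le_one_of_one_le_of_nonpos one_le_two
        (mul_nonpos_of_nonpos_of_nonneg hα0 t.cast_nonneg)
    rw [Nat.choose_eq_zero_of_lt (by omega)]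
    simp
  have hNle : (N : ℝ) ≤ 2 ^ (α * t + 1) := by
    have h1 := Real.one_le_rpow one_le_two (mul_nonneg hα0 t.cast_nonneg)
    rw [Real.rpow_add two_pos, Real.rpow_one]
    linarith [Nat.ceil_lt_add_one (Real.rpow_nonneg zero_le_two (α * t))]
  have hsum : ((∑ i ∈ range (k + 1), i : ℕ) : ℝ) = k * (k + 1) / 2 := by
    rw [sum_range_id, ← Nat.choose_two_right, Nat.cast_choose_two]
    push_cast
    ring
  have hexp := ramsey_exponent_lt (t := t) (k := k) L.cast_nonneg k.cast_nonneg
    (by exact_mod_cast hk1) (by exact_mod_cast hk2) htε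
  have hchoose : (N.choose t : ℝ) ≤ 2 ^ ((α * t + 1) * t) := by
    rw [Real.rpow_mul_natCast zero_le_two]
    exact (by exact_mod_cast Nat.choose_le_pow N t : (N.choose t : ℝ) ≤ (N : ℝ) ^ t).trans
      (pow_le_pow_left₀ N.cast_nonneg hNle t)
  suffices h : (2 : ℝ) * ((2 ^ (t + k * t + ∑ i ∈ range (k + 1), i)) ^ L * N.choose t) <
      2 ^ t.choose 2 * (2 ^ (2 * k * t)) ^ L by exact_mod_cast h
  calc (2 : ℝ) * ((2 ^ (t + k * t + ∑ i ∈ range (k + 1), i)) ^ L * N.choose t)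
      ≤ 2 * ((2 ^ (t + k * t + ∑ i ∈ range (k + 1), i)) ^ L * 2 ^ ((α * t + 1) * t)) := by gcongr
    _ = 2 ^ (1 + (t + k * t + k * (k + 1) / 2) * L + (α * t + 1) * t : ℝ) := by
        rw [← hsum, Real.rpow_add two_pos, Real.rpow_add two_pos, Real.rpow_one, ← pow_mul,
          ← Real.rpow_natCast, mul_assoc]
        push_cast
        rfl
    _ < 2 ^ (t * (t - 1) / 2 + 2 * k * t * L : ℝ) := by
        refine Real.rpow_lt_rpow_of_exponent_lt one_lt_two ?_
        rw [hα]
        push_cast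
        exact hexp
    _ = 2 ^ t.choose 2 * (2 ^ (2 * k * t)) ^ L := by
        rw [Real.rpow_add two_pos, ← Nat.cast_choose_two, Real.rpow_natCast, ← pow_mul,
          ← Real.rpow_natCast 2 (2 * k * t * L)]
        push_cast
        rfl
end

section
/- For every non-negative integer m and every real ε > 0, there exists t₀ such that for all integers t ≥ t₀ the (m+2)-color Ramsey number of K_t satisfies r(t; m+2) > 2^{((3m/8) + 1/2 − ε)·t}; that is, there exists a coloring of the edges of the complete graph on N = ⌈2^{((3m/8) + 1/2 − ε)·t}⌉ vertices with m+2 colors containing no monochromatic clique of size t. -/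
open Finset Module

/-- The tuples of pairwise `B`-orthogonal vectors, all of them orthogonal to `W`. -/
noncomputable def isotropicTuples {V ι : Type*} [AddCommGroup V] [Module (ZMod 2) V] [Fintype V]
    [Fintype ι] (B : LinearMap.BilinForm (ZMod 2) V) (W : Submodule (ZMod 2) V) :
    Finset (ι → V) := by
  classical
  exact {f | (∀ i, f i ∈ B.orthogonal W) ∧ ∀ i j, B (f i) (f j) = 0}

lemma sup_span_singleton_le_orthogonal {V : Type*} [AddCommGroup V] [Module (ZMod 2) V]
    {B : LinearMap.BilinForm (ZMod 2) V} (hA : B.IsAlt) {W : Submodule (ZMod 2) V}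
    (hW : W ≤ B.orthogonal W) {v : V} (hv : v ∈ B.orthogonal W) :
    W ⊔ Submodule.span (ZMod 2) {v} ≤ B.orthogonal (W ⊔ Submodule.span (ZMod 2) {v}) := by
  have hr := hA.isRefl
  have key : ∀ x ∈ W ⊔ Submodule.span (ZMod 2) {v}, ∀ y ∈ W ⊔ Submodule.span (ZMod 2) {v},
      B x y = 0 := by
    intro x hx y hy
    obtain ⟨a, ha, b, hb, rfl⟩ := Submodule.mem_sup.1 hx
    obtain ⟨c, hc, d, hd, rfl⟩ := Submodule.mem_sup.1 hy
    obtain ⟨p, rfl⟩ := Submodule.mem_span_singleton.1 hb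
    obtain ⟨q, rfl⟩ := Submodule.mem_span_singleton.1 hd
    have h1 : B a c = 0 := hW hc a ha
    have h2 : B a v = 0 := hv a ha
    have h3 : B v c = 0 := hr _ _ (hv c hc)
    have h4 : B v v = 0 := hA v
    simp [h1, h2, h3, h4]
  exact fun y hy x hx => key x hx y hy

section Symplectic

variable {V : Type*} [AddCommGroup V] [Module (ZMod 2) V] [Fintype V]
  {B : LinearMap.BilinForm (ZMod 2) V}

lemma mem_isotropicTuples {ι : Type*} [Fintype ι] {W : Submodule (ZMod 2) V} {f : ι → V} :
    f ∈ isotropicTuples B W ↔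
      (∀ i, f i ∈ B.orthogonal W) ∧ ∀ i j, B (f i) (f j) = 0 := by
  classical
  simp [isotropicTuples]

lemma two_mul_finrank_le_of_le_orthogonal (hB : B.Nondegenerate) {W : Submodule (ZMod 2) V}
    (hW : W ≤ B.orthogonal W) : 2 * finrank (ZMod 2) W ≤ finrank (ZMod 2) V := by
  have h1 := Submodule.finrank_mono hW
  have h2 := LinearMap.BilinForm.finrank_orthogonal hB W
  have h3 := Submodule.finrank_le W
  omega

lemma card_isotropicTuples_le (hB : B.Nondegenerate) (hA : B.IsAlt) {k : ℕ}
    (hk : finrank (ZMod 2) V = 2 * k) (s : ℕ) (W : Submodule (ZMod 2) V)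
    (hW : W ≤ B.orthogonal W) :
    #(isotropicTuples B W : Finset (Fin s → V)) ≤
      2 ^ (s + s * k + (k - finrank (ZMod 2) W + 1).choose 2) := by
  classical
  induction s generalizing W with
  | zero => exact (card_le_one_of_subsingleton _).trans Nat.one_le_two_pow
  | succ s ih =>
    have hr := two_mul_finrank_le_of_le_orthogonal hB hW
    obtain ⟨d, hd⟩ : ∃ d, k = finrank (ZMod 2) W + d := Nat.exists_eq_add_of_le (by omega)
    have cardW (U : Submodule (ZMod 2) V) :
        #{v | v ∈ U} = 2 ^ finrank (ZMod 2) U := by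
      have := Module.card_eq_pow_finrank (K := ZMod 2) (V := U)
      rw [ZMod.card] at this
      rw [← this, Fintype.card_subtype]
    have hsub : (isotropicTuples B W : Finset (Fin (s + 1) → V)) ⊆
        (({v | v ∈ W} : Finset V).biUnion fun v =>
          (isotropicTuples B W : Finset (Fin s → V)).image fun g => Fin.cons v g) ∪
        (({v | v ∈ B.orthogonal W ∧ v ∉ W} : Finset V).biUnion fun v =>
          (isotropicTuples B (W ⊔ Submodule.span (ZMod 2) {v}) : Finset (Fin s → V)).image
            fun g => Fin.cons v g) := by
      intro f hf
      rw [mem_isotropicTuples] at hf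
      obtain ⟨hf1, hf2⟩ := hf
      rw [mem_union, mem_biUnion, mem_biUnion]
      by_cases h0 : f 0 ∈ W
      · refine .inl ⟨f 0, by simpa using h0, mem_image.2 ⟨Fin.tail f, ?_, Fin.cons_self_tail f⟩⟩
        exact mem_isotropicTuples.2 ⟨fun i => hf1 _, fun i j => hf2 _ _⟩
      · refine .inr ⟨f 0, by simpa using ⟨hf1 0, h0⟩,
          mem_image.2 ⟨Fin.tail f, ?_, Fin.cons_self_tail f⟩⟩
        refine mem_isotropicTuples.2 ⟨fun i x hx => ?_, fun i j => hf2 _ _⟩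
        obtain ⟨a, ha, b, hb, rfl⟩ := Submodule.mem_sup.1 hx
        obtain ⟨p, rfl⟩ := Submodule.mem_span_singleton.1 hb
        have h1 : B a (Fin.tail f i) = 0 := hf1 _ a ha
        have h2 : B (f 0) (Fin.tail f i) = 0 := hf2 _ _
        simp [h1, h2]
    have hin : #(({v | v ∈ W} : Finset V).biUnion fun v =>
          (isotropicTuples B W : Finset (Fin s → V)).image
            fun g => (Fin.cons v g : Fin (s + 1) → V)) ≤
        2 ^ (finrank (ZMod 2) W) * 2 ^ (s + s * k + (d + 1).choose 2) := by
      rw [← cardW]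
      refine card_biUnion_le_card_mul _ _ _ fun v _ => card_image_le.trans ?_
      simpa [hd] using ih W hW
    have hout : #(({v | v ∈ B.orthogonal W ∧ v ∉ W} : Finset V).biUnion fun v =>
          (isotropicTuples B (W ⊔ Submodule.span (ZMod 2) {v}) : Finset (Fin s → V)).image
            fun g => (Fin.cons v g : Fin (s + 1) → V)) ≤
        2 ^ (2 * k - finrank (ZMod 2) W) * 2 ^ (s + s * k + d.choose 2) := by
      rw [← hk, ← LinearMap.BilinForm.finrank_orthogonal hB, ← cardW]
      refine (card_biUnion_le_card_mul _ _ (2 ^ (s + s * k + d.choose 2)) fun v hv =>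
        card_image_le.trans ?_).trans ?_
      · simp only [mem_filter, mem_univ, true_and] at hv
        have hW' := sup_span_singleton_le_orthogonal hA hW hv.1
        have hr' := two_mul_finrank_le_of_le_orthogonal hB hW'
        have := ih _ hW'
        rw [Submodule.finrank_sup_span_singleton hv.2] at this hr'
        rwa [show k - (finrank (ZMod 2) W + 1) + 1 = d by omega] at this
      · gcongr with v
        exact fun h => h.1
    have hch : (d + 1).choose 2 = d + d.choose 2 := by
      rw [Nat.choose_succ_succ' d 1, Nat.choose_one_right]
    calc _ ≤ _ := (card_le_card hsub).trans (card_union_le _ _)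
      _ ≤ _ := add_le_add hin hout
      _ ≤ 2 ^ (s + (s + 1) * k + (d + 1).choose 2) + 2 ^ (s + (s + 1) * k + (d + 1).choose 2) := by
        rw [← pow_add, ← pow_add]
        exact add_le_add (Nat.pow_le_pow_right two_pos (by rw [add_mul]; omega))
          (Nat.pow_le_pow_right two_pos (by rw [add_mul]; omega))
      _ = _ := by
        rw [show k - finrank (ZMod 2) W = d by omega]
        ring

lemma card_le_finrank_add_one {ι : Type*} [Fintype ι] (hA : B.IsAlt) (f : ι → V)
    (hf : ∀ i j, i ≠ j → B (f i) (f j) = 1) :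
    Fintype.card ι ≤ finrank (ZMod 2) V + 1 := by
  classical
  let L : (ι → ZMod 2) →ₗ[ZMod 2] V × ZMod 2 :=
    (Fintype.linearCombination (ZMod 2) f).prod (Fintype.linearCombination (ZMod 2) fun _ => 1)
  have hL : Function.Injective L := by
    rw [← LinearMap.ker_eq_bot, LinearMap.ker_eq_bot']
    intro c hc
    have h1 : ∑ i, c i • f i = 0 := congrArg Prod.fst hc
    have h2 : ∑ i, c i = 0 := by
      simpa [L, Fintype.linearCombination_apply] using congrArg Prod.snd hc
    funext j
    have h3 : ∑ i, c i * B (f i) (f j) = 0 := by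
      simpa using congrArg (fun v => B v (f j)) h1
    have h4 : ∑ i, c i * B (f i) (f j) = ∑ i, c i - c j := by
      rw [← add_sum_erase _ _ (mem_univ j), ← add_sum_erase _ c (mem_univ j), hA (f j)]
      simp only [mul_zero, zero_add, add_sub_cancel_left]
      exact sum_congr rfl fun i hi => by rw [hf i j (ne_of_mem_erase hi), mul_one]
    rw [h3, h2] at h4
    simpa using h4.symm
  simpa using LinearMap.finrank_le_finrank_of_injective hL

end Symplectic

lemma exists_symplectic (k : ℕ) : ∃ (V : Type) (_ : AddCommGroup V) (_ : Module (ZMod 2) V)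
    (_ : Fintype V) (B : LinearMap.BilinForm (ZMod 2) V),
    B.Nondegenerate ∧ B.IsAlt ∧ finrank (ZMod 2) V = 2 * k := by
  let M := Fin k → ZMod 2
  have : Finite (Dual (ZMod 2) M × M) := Module.finite_of_finite (ZMod 2)
  refine ⟨Dual (ZMod 2) M × M, inferInstance, inferInstance, Fintype.ofFinite _,
    LinearMap.dualProd (ZMod 2) M, ?_, ?_, ?_⟩
  · have hs := (LinearMap.separatingLeft_dualProd (ZMod 2) M).2
      (Module.eval_apply_injective (ZMod 2) (V := M))
    have hsym := LinearMap.isSymm_dualProd (ZMod 2) M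
    refine ⟨hs, fun y h => hs y fun x => ?_⟩
    rw [← h x]
    exact hsym.eq y x
  · intro x
    simp [CharTwo.add_self_eq_zero]
  · simp [M, two_mul]

/-- Constraining a function only along an embedding. -/
lemma card_filter_comp_embedding_le {α β ι : Type*} [Fintype α] [Fintype β] [Fintype ι]
    [DecidableEq α] [DecidableEq ι] (e : ι ↪ α) (P : Finset (ι → β)) [DecidablePred (· ∈ P)] :
    #{f : α → β | f ∘ e ∈ P} * Fintype.card β ^ Fintype.card ι ≤
      #P * Fintype.card β ^ Fintype.card α := by
  classical
  have hinj : #{f : α → β | f ∘ e ∈ P} ≤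
      #(P ×ˢ (univ : Finset ({a // a ∉ Set.range e} → β))) := by
    refine card_le_card_of_injOn (fun f => (f ∘ e, fun a => f a.1)) (fun f hf => ?_) ?_
    · simpa using hf
    · intro f _ g _ hfg
      simp only [Prod.mk.injEq] at hfg
      funext a
      by_cases ha : a ∈ Set.range e
      · obtain ⟨i, rfl⟩ := ha
        exact congrFun hfg.1 i
      · exact congrFun hfg.2 ⟨a, ha⟩
  have hcard : Fintype.card {a // a ∉ Set.range e} + Fintype.card ι = Fintype.card α := by
    rw [Fintype.card_subtype_compl]
    have h : Fintype.card {a // a ∈ Set.range e} = Fintype.card ι :=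
      (Fintype.card_congr (Equiv.ofInjective e e.injective)).symm
    have := Fintype.card_le_of_embedding e
    omega
  rw [card_product, card_univ, Fintype.card_fun] at hinj
  calc _ ≤ _ := Nat.mul_le_mul_right _ hinj
    _ = _ := by rw [mul_assoc, ← pow_add, hcard]

lemma card_bool_const_on_edges_le {α : Type*} [Fintype α] [DecidableEq α] (S : Finset α) :
    #{c : Sym2 α → Bool | ∃ b, ∀ x ∈ S, ∀ y ∈ S, x ≠ y → c s(x, y) = b} * 2 ^ (#S).choose 2 ≤
      2 * 2 ^ Fintype.card (Sym2 α) := by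
  classical
  let E : Finset (Sym2 α) := S.offDiag.image Sym2.mk.uncurry
  let P : Finset (E → Bool) := univ.image fun b _ => b
  have hP : #P ≤ 2 := card_image_le.trans (by simp)
  have h := card_filter_comp_embedding_le (Function.Embedding.subtype (· ∈ E)) P
  have hE : Fintype.card {x // x ∈ E} = (#S).choose 2 := by
    rw [Fintype.card_coe, Sym2.card_image_offDiag]
  rw [hE, Fintype.card_bool] at h
  refine le_trans (Nat.mul_le_mul_right _ (card_le_card ?_)) (h.trans (Nat.mul_le_mul_right _ hP))
  intro c hc
  simp only [mem_filter, mem_univ, true_and] at hc ⊢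
  obtain ⟨b, hb⟩ := hc
  refine mem_image.2 ⟨b, mem_univ _, ?_⟩
  funext ⟨z, hz⟩
  obtain ⟨⟨x, y⟩, hxy, rfl⟩ := mem_image.1 hz
  rw [mem_offDiag] at hxy
  exact (hb x hxy.1 y hxy.2.1 hxy.2.2).symm

lemma card_isotropic_on_le {V α : Type*} [AddCommGroup V] [Module (ZMod 2) V] [Fintype V]
    [Fintype α] {B : LinearMap.BilinForm (ZMod 2) V}
    [DecidableEq V] [DecidableEq α] (hB : B.Nondegenerate) (hA : B.IsAlt) {k : ℕ}
    (hk : finrank (ZMod 2) V = 2 * k) (S : Finset α) :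
    #{f : α → V | ∀ x ∈ S, ∀ y ∈ S, B (f x) (f y) = 0} * 2 ^ (2 * k * #S) ≤
      2 ^ (#S + #S * k + (k + 1).choose 2) * 2 ^ (2 * k * Fintype.card α) := by
  classical
  have hV : Fintype.card V = 2 ^ (2 * k) := by
    rw [Module.card_eq_pow_finrank (K := ZMod 2), ZMod.card, hk]
  let e : Fin #S ↪ α := S.equivFin.symm.toEmbedding.trans (Function.Embedding.subtype _)
  have h := card_filter_comp_embedding_le e (isotropicTuples B ⊥)
  have hiso := card_isotropicTuples_le hB hA hk #S ⊥ bot_le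
  rw [finrank_bot, Nat.sub_zero] at hiso
  rw [hV, ← pow_mul, ← pow_mul, Fintype.card_fin] at h
  refine le_trans (Nat.mul_le_mul_right _ (card_le_card ?_)) (h.trans (Nat.mul_le_mul_right _ hiso))
  intro f hf
  simp only [mem_filter, mem_univ, true_and] at hf ⊢
  have he (i) : e i ∈ S := (S.equivFin.symm i).2
  refine mem_isotropicTuples.2 ⟨fun i w hw => ?_, fun i j => hf _ (he i) _ (he j)⟩
  rw [Submodule.mem_bot] at hw
  simp [hw]

/-- The union bound: some choice of maps and of a two-coloring avoids all bad `t`-sets. -/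
lemma exists_maps_and_bool_coloring {V α : Type*} [AddCommGroup V] [Module (ZMod 2) V]
    [Fintype V] [Fintype α] {B : LinearMap.BilinForm (ZMod 2) V}
    (hB : B.Nondegenerate) (hA : B.IsAlt) {k : ℕ}
    (hk : finrank (ZMod 2) V = 2 * k) (m t : ℕ)
    (hN : Fintype.card α ^ t * (2 ^ (m * (t + t * k + (k + 1).choose 2)) * 2) <
      2 ^ (m * (2 * k * t)) * 2 ^ t.choose 2) :
    ∃ (F : Fin m → α → V) (c : Sym2 α → Bool), ∀ S : Finset α, #S = t →
      ¬ ((∀ r, ∀ x ∈ S, ∀ y ∈ S, B (F r x) (F r y) = 0) ∧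
        ∃ b, ∀ x ∈ S, ∀ y ∈ S, x ≠ y → c s(x, y) = b) := by
  classical
  by_contra! hcon
  let N := Fintype.card α
  let E := Fintype.card (Sym2 α)
  let A (S : Finset α) : Finset (α → V) := {f | ∀ x ∈ S, ∀ y ∈ S, B (f x) (f y) = 0}
  let C (S : Finset α) : Finset (Sym2 α → Bool) :=
    {c | ∃ b, ∀ x ∈ S, ∀ y ∈ S, x ≠ y → c s(x, y) = b}
  let bad (S : Finset α) : Finset ((Fin m → α → V) × (Sym2 α → Bool)) :=
    Fintype.piFinset (fun _ => A S) ×ˢ C S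
  have hV : Fintype.card V = 2 ^ (2 * k) := by
    rw [Module.card_eq_pow_finrank (K := ZMod 2), ZMod.card, hk]
  have hcover : (univ : Finset ((Fin m → α → V) × (Sym2 α → Bool))) ⊆
      (powersetCard t univ).biUnion bad := by
    rintro ⟨F, c⟩ -
    obtain ⟨S, hS, hF, hc⟩ := hcon F c
    refine mem_biUnion.2 ⟨S, mem_powersetCard.2 ⟨subset_univ _, hS⟩, mem_product.2 ⟨?_, ?_⟩⟩
    · exact Fintype.mem_piFinset.2 fun r => mem_filter.2 ⟨mem_univ _, hF r⟩
    · exact mem_filter.2 ⟨mem_univ _, hc⟩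
  let D := 2 ^ (m * (2 * k * t)) * 2 ^ t.choose 2
  have hbad : ∀ S ∈ powersetCard t (univ : Finset α), #(bad S) * D ≤
      (2 ^ (m * (t + t * k + (k + 1).choose 2)) * 2) * (2 ^ (m * (2 * k * N)) * 2 ^ E) := by
    intro S hS
    have hS' := (mem_powersetCard.1 hS).2
    have h1 := Nat.pow_le_pow_left (card_isotropic_on_le (α := α) hB hA hk S) m
    have h2 := card_bool_const_on_edges_le S
    rw [hS'] at h1 h2
    have h3 := Nat.mul_le_mul h1 h2
    rw [card_product, Fintype.card_piFinset_const]
    calc _ = _ := ?_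
      _ ≤ _ := h3
      _ = _ := ?_
    · simp only [D, A, C]
      ring
    · simp only [E, N]
      ring
  have htot : 2 ^ (m * (2 * k * N)) * 2 ^ E ≤ ∑ S ∈ powersetCard t univ, #(bad S) := by
    refine le_trans (le_of_eq ?_) ((card_le_card hcover).trans card_biUnion_le)
    rw [card_univ, Fintype.card_prod, Fintype.card_fun, Fintype.card_fun, Fintype.card_fun,
      hV, Fintype.card_bool, Fintype.card_fin, ← pow_mul, ← pow_mul]
    congr 2
    ring
  have hsum : (∑ S ∈ powersetCard t univ, #(bad S)) * D ≤
      N ^ t * ((2 ^ (m * (t + t * k + (k + 1).choose 2)) * 2) *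
        (2 ^ (m * (2 * k * N)) * 2 ^ E)) := by
    rw [sum_mul]
    refine (sum_le_card_nsmul _ _ _ hbad).trans ?_
    rw [smul_eq_mul, card_powersetCard, card_univ]
    exact Nat.mul_le_mul_right _ (Nat.choose_le_pow _ _)
  have hpos : 0 < 2 ^ (m * (2 * k * N)) * 2 ^ E := by positivity
  have h1 := (Nat.mul_le_mul_right D htot).trans hsum
  rw [← mul_assoc (N ^ t), mul_comm _ D] at h1
  exact absurd (Nat.le_of_mul_le_mul_right h1 hpos) (not_le.2 hN)

/-- A quantitative criterion for the existence of an `(m + 2)`-coloring without monochromatic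
cliques on `t` vertices. -/
lemma exists_coloring_of_card_lt {α : Type*} [Fintype α] (m t k : ℕ) (hkt : 2 * k + 2 ≤ t)
    (hN : Fintype.card α ^ t * (2 ^ (m * (t + t * k + (k + 1).choose 2)) * 2) <
      2 ^ (m * (2 * k * t)) * 2 ^ t.choose 2) :
    ∃ χ : α → α → Fin (m + 2), (∀ x y, χ x y = χ y x) ∧
      ¬ ∃ (S : Finset α) (c : Fin (m + 2)), #S = t ∧
        ∀ x ∈ S, ∀ y ∈ S, x ≠ y → χ x y = c := by
  classical
  obtain ⟨V, _, _, _, B, hB, hA, hk⟩ := exists_symplectic k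
  obtain ⟨F, c, hFc⟩ := exists_maps_and_bool_coloring (α := α) hB hA hk m t hN
  let G (R : Set (Fin m)) (b : Bool) : Fin (m + 2) :=
    if h : R.Nonempty then Fin.castAdd 2 h.some else Fin.natAdd m (if b then 0 else 1)
  refine ⟨fun x y => G {r | B (F r x) (F r y) ≠ 0} (c s(x, y)), fun x y => ?_, ?_⟩
  · simp only [Sym2.eq_swap (a := x), hA.isRefl.eq_iff (x := F _ x), ne_eq]
  · rintro ⟨S, col, hS, hmono⟩
    induction col using Fin.addCases with
    | left r =>
      have hedge : ∀ x ∈ S, ∀ y ∈ S, x ≠ y → B (F r x) (F r y) = 1 := by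
        intro x hx y hy hxy
        have h := hmono x hx y hy hxy
        simp only [G] at h
        split_ifs at h with hne hb
        · have hr := hne.some_mem
          rw [Fin.castAdd_injective m 2 h] at hr
          exact (by decide : ∀ a : ZMod 2, a ≠ 0 → a = 1) _ hr
        all_goals
          have := congrArg Fin.val h
          simp at this
          omega
      have := card_le_finrank_add_one hA (fun x : S => F r x)
        fun i j hij => hedge i i.2 j j.2 fun h => hij (Subtype.ext h)
      rw [Fintype.card_coe] at this
      omega
    | right b =>
      have hedge : ∀ x ∈ S, ∀ y ∈ S, x ≠ y →
          (∀ r, B (F r x) (F r y) = 0) ∧ c s(x, y) = decide (b = 0) := by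
        intro x hx y hy hxy
        have h := hmono x hx y hy hxy
        simp only [G] at h
        split_ifs at h with hne hb
        · have := congrArg Fin.val h
          simp at this
          omega
        all_goals
          refine ⟨fun r => ?_, ?_⟩
          · by_contra hr
            exact hne ⟨r, hr⟩
          · have := Fin.natAdd_injective 2 m h
            subst this
            simpa using hb
      refine hFc S hS ⟨fun r x hx y hy => ?_, decide (b = 0), fun x hx y hy hxy =>
        (hedge x hx y hy hxy).2⟩
      by_cases hxy : x = y
      · rw [hxy]
        exact hA _
      · exact (hedge x hx y hy hxy).1 r

lemma natCeil_two_rpow_le {x y : ℝ} (hxy : x ≤ y) (hy : 0 ≤ y) :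
    (⌈(2 : ℝ) ^ x⌉₊ : ℝ) ≤ 2 ^ (y + 1) := by
  have h1 := (Nat.ceil_lt_add_one (by positivity : (0 : ℝ) ≤ 2 ^ x)).le
  have h2 : (2 : ℝ) ^ x ≤ 2 ^ y := Real.rpow_le_rpow_of_exponent_le one_le_two hxy
  have h3 : (1 : ℝ) ≤ 2 ^ y := Real.one_le_rpow one_le_two hy
  rw [Real.rpow_add_one two_ne_zero]
  linarith

lemma exponent_lt {m t k δ : ℝ} (hm : 0 ≤ m) (ht : 2 ≤ t) (hk1 : t ≤ 2 * k + 3)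
    (hk2 : 2 * k + 2 ≤ t) (hk : 0 ≤ k) (hδ : 3 * m + 3 < δ * t) :
    ((3 * m / 8 + 1 / 2 - δ) * t + 1) * t + m * (t + t * k + (k + 1) * k / 2) + 1 <
      m * (2 * k * t) + t * (t - 1) / 2 := by
  have h1 : t * (t - 3) / 2 ≤ t * k := by nlinarith
  have h2 : (k + 1) * k ≤ t / 2 * ((t - 2) / 2) := by
    apply mul_le_mul <;> linarith
  have h3 : m * (3 * t ^ 2 / 8 + t + (k + 1) * k / 2 - t * k) ≤ m * (3 * t) := by
    apply mul_le_mul_of_nonneg_left _ hm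
    nlinarith
  nlinarith [mul_lt_mul_of_pos_right hδ (by linarith : 0 < t)]

/-- For every non-negative integer `m` and every `ε > 0`, there is `t₀` such that for all
`t ≥ t₀`, the `(m+2)`-color Ramsey number satisfies `r(t;m+2) > 2^{((3m/8) + 1/2 - ε) t}`:
there is an `(m+2)`-coloring of the edges of the complete graph on
`⌈2^{((3m/8) + 1/2 - ε) t}⌉` vertices with no monochromatic clique of size `t`. -/
theorem ramsey_lower_bound_m_plus_two (m : ℕ) (ε : ℝ) (hε : 0 < ε) :
    ∃ t₀ : ℕ, ∀ t : ℕ, t₀ ≤ t →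
      ∃ χ : Fin (⌈(2 : ℝ) ^ (((3 * m : ℝ) / 8 + 1 / 2 - ε) * t)⌉₊) →
            Fin (⌈(2 : ℝ) ^ (((3 * m : ℝ) / 8 + 1 / 2 - ε) * t)⌉₊) → Fin (m + 2),
        (∀ x y, χ x y = χ y x) ∧
        ¬ ∃ (S : Finset (Fin (⌈(2 : ℝ) ^ (((3 * m : ℝ) / 8 + 1 / 2 - ε) * t)⌉₊)))
            (c : Fin (m + 2)), S.card = t ∧ ∀ x ∈ S, ∀ y ∈ S, x ≠ y → χ x y = c := by
  have hδ : 0 < min ε (1 / 2) := lt_min hε (by norm_num)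
  set δ := min ε (1 / 2)
  obtain ⟨n, hn⟩ := exists_nat_gt ((3 * m + 3) / δ)
  refine ⟨n + 2, fun t ht => ?_⟩
  obtain ⟨k, hk1, hk2⟩ : ∃ k : ℕ, t ≤ 2 * k + 3 ∧ 2 * k + 2 ≤ t :=
    ⟨(t - 2) / 2, by omega, by omega⟩
  refine exists_coloring_of_card_lt m t k hk2 ?_
  rw [Fintype.card_fin]
  have hδε : δ ≤ ε := min_le_left _ _
  have hδ2 : δ ≤ 1 / 2 := min_le_right _ _
  have hm : (0 : ℝ) ≤ m := m.cast_nonneg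
  have hnt : (n : ℝ) + 2 ≤ t := by exact_mod_cast ht
  have hδt : 3 * (m : ℝ) + 3 < δ * t := by
    rw [div_lt_iff₀ hδ] at hn
    nlinarith
  have hceil := natCeil_two_rpow_le
    (x := ((3 * m : ℝ) / 8 + 1 / 2 - ε) * t) (y := ((3 * m : ℝ) / 8 + 1 / 2 - δ) * t)
    (by gcongr) (mul_nonneg (by linarith) t.cast_nonneg)
  have hexp := exponent_lt (k := k) hm (t := t) (by linarith [n.cast_nonneg (α := ℝ)])
    (by exact_mod_cast hk1) (by exact_mod_cast hk2) k.cast_nonneg hδt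
  have hpow := pow_le_pow_left₀ (Nat.cast_nonneg _) hceil t
  rw [← Real.rpow_mul_natCast zero_le_two] at hpow
  rw [← Nat.cast_lt (α := ℝ)]
  push_cast
  refine (mul_le_mul_of_nonneg_right hpow (by positivity)).trans_lt ?_
  simp only [← Real.rpow_natCast]
  rw [← Real.rpow_add_one two_ne_zero, ← Real.rpow_add two_pos, ← Real.rpow_add two_pos]
  refine Real.rpow_lt_rpow_of_exponent_lt one_lt_two ?_
  push_cast [Nat.cast_choose_two]
  linarith
end

section
/- Let t be an even positive integer, let V ⊆ 𝔽₂^t be the set of vectors of even Hamming weight, and let G₀ be the simple graph on vertex set V in which distinct u, v ∈ V are adjacent if and only if u · v = 1 (scalar product over 𝔽₂). Then G₀ contains no clique of order t, i.e., there is no set of t vertices of G₀ that are pairwise adjacent. -/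
/-- The coordinate sum of a vector over `𝔽₂` is the parity of its Hamming weight. -/
theorem ZMod.sum_eq_card_filter_ne_zero {ι : Type*} [Fintype ι] (v : ι → ZMod 2) :
    ∑ i, v i = ((Finset.univ.filter (fun i => v i ≠ 0)).card : ZMod 2) := by
  rw [Finset.card_filter, Nat.cast_sum]
  refine Finset.sum_congr rfl fun i _ => ?_
  generalize v i = x
  revert x
  decide

/-- In even dimension over `𝔽₂`, the all-ones matrix with zero diagonal is an involution. -/
theorem Matrix.ones_sub_one_mul_self {ι : Type*} [Fintype ι] [DecidableEq ι]
    (h : Even (Fintype.card ι)) :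
    ((Matrix.of fun _ _ => 1) - 1 : Matrix ι ι (ZMod 2)) * ((Matrix.of fun _ _ => 1) - 1) = 1 := by
  have hJ : (Matrix.of fun _ _ => 1 : Matrix ι ι (ZMod 2)) * (Matrix.of fun _ _ => 1) = 0 := by
    ext i j
    simp [Matrix.mul_apply, (ZMod.natCast_eq_zero_iff_even).2 h]
  rw [sub_mul, mul_sub, hJ, one_mul, mul_one, zero_sub]
  ext i j
  simp only [Matrix.sub_apply, Matrix.neg_apply, Matrix.of_apply]
  generalize (1 : Matrix ι ι (ZMod 2)) i j = x
  revert x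
  decide

/-- Let `t` be an even positive integer. In the graph `G₀` on the even-weight vectors of
`𝔽₂^t` where distinct `u, v` are adjacent iff `u ⬝ v = 1`, there is no clique of order `t`:
no set of `t` even-weight vectors is pairwise adjacent. -/
theorem conlon_ferber_no_clique (t : ℕ) (ht : 0 < t) (htEven : Even t) :
    ¬ ∃ S : Finset (Fin t → ZMod 2),
        S.card = t ∧
        (∀ v ∈ S, Even (Finset.univ.filter (fun i => v i ≠ 0)).card) ∧
        (∀ u ∈ S, ∀ v ∈ S, u ≠ v → ∑ i, u i * v i = 1) := by
  rintro ⟨S, hcard, heven, hadj⟩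
  let e := (S.equivFinOfCardEq hcard).symm
  let A : Matrix (Fin t) (Fin t) (ZMod 2) := Matrix.of fun i => (e i : Fin t → ZMod 2)
  have hsum (i : Fin t) : ∑ k, A i k = 0 := by
    rw [ZMod.sum_eq_card_filter_ne_zero, ZMod.natCast_eq_zero_iff_even]
    exact heven _ (e i).2
  have hgram : A * A.transpose = (Matrix.of fun _ _ => 1) - 1 := by
    ext i j
    rcases eq_or_ne i j with rfl | hij
    · have hsq (x : ZMod 2) : x * x = x := by revert x; decide
      simp [Matrix.mul_apply, hsq, hsum]
    · simpa [A, Matrix.mul_apply, hij] using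
        hadj _ (e i).2 _ (e j).2 fun h => hij (e.injective (Subtype.ext h))
  have hright : A * (A.transpose * ((Matrix.of fun _ _ => 1) - 1)) = 1 := by
    rw [← Matrix.mul_assoc, hgram]
    exact Matrix.ones_sub_one_mul_self (by simpa using htEven)
  have hker : A.mulVec 1 = 0 := by
    ext i
    simpa [Matrix.mulVec, dotProduct] using hsum i
  have hone : (1 : Fin t → ZMod 2) = 0 := by
    rw [← Matrix.one_mulVec (1 : Fin t → ZMod 2), ← mul_eq_one_comm.1 hright,
      ← Matrix.mulVec_mulVec, hker, Matrix.mulVec_zero]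
  exact one_ne_zero (congrFun hone ⟨0, ht⟩)
end

section
/- For every non-negative integer m and every real ε > 0 there exists t₀ such that for every even integer t ≥ t₀ the following holds. Let V ⊆ 𝔽₂^t be the set of vectors of even Hamming weight and let G₀ be the simple graph on V in which distinct u, v are adjacent iff u · v = 1. Then for a fixed t-element set S, the number of m-tuples (f₁, …, f_m) of functions from S to V such that the image fᵢ(S) is an independent set of G₀ for every i ∈ {1, …, m} is at most 2^{(−3m/8 + ε)·t²} · |V|^{m·t}, where |V| = 2^{t−1}. -/
open Submodule
open LinearMap (BilinForm)

variable {E : Type*} [AddCommGroup E] [Module (ZMod 2) E]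

/-- The sequences of `k` pairwise orthogonal vectors that are all orthogonal to `W`. -/
abbrev OrthogonalTuple (B : BilinForm (ZMod 2) E) (k : ℕ) (W : Submodule (ZMod 2) E) : Type _ :=
  {f : Fin k → E // (∀ i, f i ∈ B.orthogonal W) ∧ ∀ i j, i < j → B (f i) (f j) = 0}

section Counting

variable [Finite E]

lemma card_orthogonalTuple_le_pow (B : BilinForm (ZMod 2) E) (k : ℕ) (W : Submodule (ZMod 2) E) :
    Nat.card (OrthogonalTuple B k W) ≤ Nat.card (B.orthogonal W) ^ k := by
  rw [← Nat.card_fin k, ← Nat.card_fun, Nat.card_fin]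
  refine Nat.card_le_card_of_injective
    (fun f i => (⟨f.1 i, f.2.1 i⟩ : B.orthogonal W)) fun f g h => ?_
  ext i
  simpa using congrFun h i

lemma card_orthogonalTuple_succ_le (B : BilinForm (ZMod 2) E) (k : ℕ)
    (W : Submodule (ZMod 2) E) [Fintype (B.orthogonal W)] :
    Nat.card (OrthogonalTuple B (k + 1) W) ≤
      ∑ v : B.orthogonal W, Nat.card (OrthogonalTuple B k (W ⊔ span (ZMod 2) {(v : E)})) := by
  rw [← Nat.card_sigma]
  refine Nat.card_le_card_of_injective
    (fun f => ⟨⟨f.1 0, f.2.1 0⟩, ⟨Fin.tail f.1, fun i => ?_, fun i j hij =>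
      f.2.2 _ _ (Fin.succ_lt_succ_iff.2 hij)⟩⟩) fun f g h => ?_
  · rw [BilinForm.mem_orthogonal_iff]
    intro w hw
    obtain ⟨a, ha, b, hb, rfl⟩ := mem_sup.1 hw
    obtain ⟨c, rfl⟩ := mem_span_singleton.1 hb
    have h1 : B a (f.1 i.succ) = 0 := f.2.1 i.succ a ha
    have h2 : B (f.1 0) (f.1 i.succ) = 0 := f.2.2 _ _ (Fin.succ_pos i)
    simp [Fin.tail, h1, h2]
  · have h0 : f.1 0 = g.1 0 := congrArg (fun p => (p.1 : E)) h
    have ht : Fin.tail f.1 = Fin.tail g.1 := congrArg (fun p => p.2.1) h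
    ext1
    rw [← Fin.cons_self_tail f.1, ← Fin.cons_self_tail g.1, h0, ht]

/-- The first vector of a tuple either lies in `W`, which leaves `W` unchanged for the remaining
vectors, or raises the dimension of `W` by one; the bound follows by induction on the length. -/
lemma card_orthogonalTuple_le (B : BilinForm (ZMod 2) E) (hB : B.Nondegenerate) {n : ℕ}
    (hn : Module.finrank (ZMod 2) E = 2 * n) (k : ℕ) :
    ∀ (d : ℕ) (W : Submodule (ZMod 2) E), Module.finrank (ZMod 2) W + d = n →
      Nat.card (OrthogonalTuple B k W) ≤ 2 ^ (k + n * k + (d + 1).choose 2) := by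
  classical
  have := Fintype.ofFinite E
  have hcard (W : Submodule (ZMod 2) E) :
      Nat.card W = 2 ^ Module.finrank (ZMod 2) W := by
    rw [Module.natCard_eq_pow_finrank (K := ZMod 2), Nat.card_zmod]
  have hperp (W : Submodule (ZMod 2) E) :
      Nat.card (B.orthogonal W) = 2 ^ (2 * n - Module.finrank (ZMod 2) W) := by
    rw [hcard, BilinForm.finrank_orthogonal hB, hn]
  induction k with
  | zero =>
    intro d W _
    exact (card_orthogonalTuple_le_pow B 0 W).trans (by simpa using Nat.one_le_two_pow)
  | succ k ih =>
    intro d W hW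
    obtain _ | d := d
    · refine (card_orthogonalTuple_le_pow B (k + 1) W).trans ?_
      rw [hperp, ← pow_mul]
      refine Nat.pow_le_pow_right two_pos ?_
      rw [show 2 * n - Module.finrank (ZMod 2) W = n by omega]
      omega
    · set b := 2 ^ (k + n * k + (d + 2).choose 2) with hb
      set c := 2 ^ (k + n * k + (d + 1).choose 2) with hc
      have hchoose : (d + 2).choose 2 = (d + 1) + (d + 1).choose 2 := by
        rw [Nat.choose_succ_succ' (d + 1) 1, Nat.choose_one_right]
      have hsmall : (Finset.univ.filter fun v : B.orthogonal W => (v : E) ∈ W).card ≤ 2 ^ n := by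
        have h1 : (Finset.univ.filter fun v : B.orthogonal W => (v : E) ∈ W).card ≤ Nat.card W := by
          rw [← Fintype.card_subtype, ← Nat.card_eq_fintype_card]
          refine Nat.card_le_card_of_injective (fun v => (⟨v.1, v.2⟩ : W)) fun v w h => ?_
          ext
          simpa using h
        rw [hcard] at h1
        exact h1.trans (Nat.pow_le_pow_right two_pos (by omega))
      calc Nat.card (OrthogonalTuple B (k + 1) W)
          ≤ ∑ v : B.orthogonal W, Nat.card (OrthogonalTuple B k (W ⊔ span (ZMod 2) {(v : E)})) :=
            card_orthogonalTuple_succ_le B k W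
        _ ≤ ∑ v : B.orthogonal W, ((if (v : E) ∈ W then b else 0) + c) := by
            refine Finset.sum_le_sum fun v _ => ?_
            split_ifs with hv
            · rw [sup_eq_left.2 ((span_singleton_le_iff_mem _ _).2 hv)]
              exact (ih (d + 1) W hW).trans (Nat.le_add_right _ _)
            · rw [zero_add]
              refine ih d _ ?_
              rw [finrank_sup_span_singleton hv]
              omega
        _ = (Finset.univ.filter fun v : B.orthogonal W => (v : E) ∈ W).card * b +
              2 ^ (n + (d + 1)) * c := by
            rw [Finset.sum_add_distrib, ← Finset.sum_filter, Finset.sum_const, Finset.sum_const,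
              Finset.card_univ, ← Nat.card_eq_fintype_card, hperp, smul_eq_mul, smul_eq_mul,
              show 2 * n - Module.finrank (ZMod 2) W = n + (d + 1) by omega]
        _ ≤ 2 ^ n * b + 2 ^ (n + (d + 1)) * c := by gcongr
        _ = 2 ^ (k + 1 + n * (k + 1) + (d + 1 + 1).choose 2) := by
            rw [hb, hc, show d + 1 + 1 = d + 2 from rfl, hchoose]
            ring

end Counting

lemma dotProduct_self_eq_zero_of_even {ι : Type*} [Fintype ι] (v : ι → ZMod 2)
    (hv : Even (Finset.univ.filter (fun i => v i ≠ 0)).card) : ∑ k, v k * v k = 0 := by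
  have h : ∀ a : ZMod 2, a * a = if a ≠ 0 then 1 else 0 := by decide
  simp_rw [h]
  rw [Finset.sum_boole]
  exact (ZMod.natCast_eq_zero_iff_even).2 hv

lemma card_independent_image_le {n : ℕ} (S : Type) [Fintype S] (hS : Fintype.card S = 2 * n) :
    Nat.card {f : S → {v : Fin (2 * n) → ZMod 2 //
          Even (Finset.univ.filter (fun i => v i ≠ 0)).card} //
        ∀ x y : S, f x ≠ f y →
          ∑ k, (f x : Fin (2 * n) → ZMod 2) k * (f y : Fin (2 * n) → ZMod 2) k ≠ 1} ≤
      2 ^ (2 * n + n * (2 * n) + (n + 1).choose 2) := by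
  set B : BilinForm (ZMod 2) (Fin (2 * n) → ZMod 2) := Matrix.toBilin' 1 with hB
  have hBapply (u v : Fin (2 * n) → ZMod 2) : B u v = ∑ k, u k * v k := by
    rw [hB, Matrix.toBilin'_apply', Matrix.one_mulVec]
    rfl
  have hnondeg : B.Nondegenerate :=
    BilinForm.nondegenerate_toBilin'_iff_det_ne_zero.2 (by simp)
  refine le_trans ?_ (card_orthogonalTuple_le B hnondeg (by simp) (2 * n) n ⊥ (by simp))
  let e : Fin (2 * n) ≃ S := (Fintype.equivFinOfCardEq hS).symm
  refine Nat.card_le_card_of_injective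
    (fun f => ⟨fun i => (f.1 (e i)).1, fun i => by simp [BilinForm.orthogonal_bot],
      fun i j _ => ?_⟩) fun f g h => ?_
  · rw [hBapply]
    by_cases hij : f.1 (e i) = f.1 (e j)
    · simp only [hij]
      exact dotProduct_self_eq_zero_of_even _ (f.1 (e j)).2
    · have hdich : ∀ a : ZMod 2, a ≠ 1 → a = 0 := by decide
      exact hdich _ (f.2 _ _ hij)
  · ext x i
    have := congrFun (congrArg (fun p => p.1) h) (e.symm x)
    simpa using congrFun this i

/-- For every non-negative integer `m` and every `ε > 0` there is `t₀` such that for every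
even `t ≥ t₀` and every fixed `t`-element set `S`, the number of `m`-tuples `(f₁, …, f_m)`
of functions `S → V` (where `V` is the set of even-weight vectors of `𝔽₂^t`, so
`|V| = 2^{t-1}`) such that each image `fᵢ(S)` is an independent set of the graph `G₀`
(distinct `u, v` adjacent iff `u ⬝ v = 1`) is at most `2^{(-3m/8 + ε) t²} · |V|^{m t}`. -/
theorem count_tuples_with_independent_images (m : ℕ) (ε : ℝ) (hε : 0 < ε) :
    ∃ t₀ : ℕ, ∀ t : ℕ, t₀ ≤ t → Even t →
      ∀ (S : Type) [Fintype S], Fintype.card S = t →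
        (Nat.card
            {f : Fin m → S → {v : Fin t → ZMod 2 //
                Even (Finset.univ.filter (fun i => v i ≠ 0)).card} //
              ∀ i : Fin m, ∀ x y : S, f i x ≠ f i y →
                ∑ k, (f i x : Fin t → ZMod 2) k * (f i y : Fin t → ZMod 2) k ≠ 1} : ℝ)
          ≤ (2 : ℝ) ^ ((-(3 * m : ℝ) / 8 + ε) * t ^ 2) *
              ((2 : ℝ) ^ ((t : ℝ) - 1)) ^ (m * t) := by
  obtain ⟨t₀, ht₀⟩ := exists_nat_ge (3 * m / ε)
  refine ⟨t₀, ?_⟩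
  rintro t ht ⟨n, rfl⟩ S _ hS
  rw [← two_mul] at *
  have hpow : Nat.card {f : Fin m → S → {v : Fin (2 * n) → ZMod 2 //
          Even (Finset.univ.filter (fun i => v i ≠ 0)).card} //
        ∀ i : Fin m, ∀ x y : S, f i x ≠ f i y →
          ∑ k, (f i x : Fin (2 * n) → ZMod 2) k * (f i y : Fin (2 * n) → ZMod 2) k ≠ 1} ≤
      (2 ^ (2 * n + n * (2 * n) + (n + 1).choose 2)) ^ m := by
    refine le_trans ?_ (Nat.pow_le_pow_left (card_independent_image_le S hS) m)
    rw [Nat.card_congr (Equiv.subtypePiEquivPi (p := fun _ (f : S → {v : Fin (2 * n) → ZMod 2 //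
          Even (Finset.univ.filter (fun i => v i ≠ 0)).card}) => ∀ x y : S, f x ≠ f y →
          ∑ k, (f x : Fin (2 * n) → ZMod 2) k * (f y : Fin (2 * n) → ZMod 2) k ≠ 1)),
      Nat.card_fun, Nat.card_fin]
  have hexp : 3 * (m : ℝ) ≤ ε * (2 * n) := by
    have h : (t₀ : ℝ) ≤ 2 * n := by exact_mod_cast ht
    rw [div_le_iff₀ hε] at ht₀
    nlinarith
  refine (Nat.cast_le.2 hpow).trans ?_
  push_cast
  rw [← pow_mul, ← Real.rpow_natCast, ← Real.rpow_natCast (2 ^ (2 * (n : ℝ) - 1)),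
    ← Real.rpow_mul two_pos.le, ← Real.rpow_add two_pos]
  refine Real.rpow_le_rpow_of_exponent_le one_le_two ?_
  push_cast [Nat.cast_choose_two]
  nlinarith [mul_le_mul_of_nonneg_right hexp (Nat.cast_nonneg (α := ℝ) n),
    mul_nonneg (Nat.cast_nonneg (α := ℝ) m) (Nat.cast_nonneg (α := ℝ) n)]
end
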